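/- arXiv:1302.3024 — 3 statements merged into one kernel-verified Lean document; each statement's English description precedes it below -/
import Mathlib

section
/- There exists a quasiperiodically forced increasing interval map f̂ : 𝔸 → 𝔸 (𝔸 = T¹ × I) such that: f̂ has no continuous invariant curves; f̂(𝔸) ⊆ int 𝔸; and the global attractor ⋂_{n∈ℕ} f̂ⁿ(𝔸) is pinched and contains a unique minimal set M, which is almost automorphic. -/
open Set Function MeasureTheory

noncomputable section

/-- The circle `T¹ = ℝ/ℤ`. -/
abbrev T1 := AddCircle (1 : ℝ)

/-- The `n`-th iterate (`n ∈ ℤ`) of a bijection. -/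
def zIter {X : Type*} (g : Equiv.Perm X) (n : ℤ) : X → X := fun x => (g ^ n) x

/-- A set of integers is syndetic if it has bounded gaps. -/
def ZSyndetic (S : Set ℤ) : Prop := ∃ N : ℕ, ∀ n : ℤ, ∃ k ∈ S, |k - n| ≤ (N : ℤ)

/-- A homeomorphism `α` of a metric space is almost periodic if for every `ε > 0` the set
`{n ∈ ℤ | dist(αⁿ, Id) < ε}` is syndetic. -/
def AlmostPeriodicHomeo {Θ : Type*} [MetricSpace Θ] (α : Θ ≃ₜ Θ) : Prop :=
  ∀ ε > (0 : ℝ), ZSyndetic {n : ℤ | ∀ θ : Θ, dist (zIter α.toEquiv n θ) θ < ε}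

/-- A homeomorphism is minimal if every (two-sided) orbit is dense. -/
def MinimalHomeo {Θ : Type*} [TopologicalSpace Θ] (α : Θ ≃ₜ Θ) : Prop :=
  ∀ θ : Θ, Dense (range fun n : ℤ => zIter α.toEquiv n θ)

/-- A self-map `g` of a metric space is almost periodic if its family of iterates
is (uniformly) equicontinuous. -/
def AlmostPeriodicMap {Y : Type*} [MetricSpace Y] (g : Y → Y) : Prop :=
  ∀ ε > (0 : ℝ), ∃ δ > (0 : ℝ), ∀ y y' : Y, dist y y' < δ → ∀ n : ℕ, dist (g^[n] y) (g^[n] y') < ε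

/-- `h` is a factor map (semiconjugacy) from `(X, f)` onto `(Y, g)`:
a continuous surjection with `h ∘ f = g ∘ h`.  Then `(X, f)` is a topological
extension of `(Y, g)`. -/
def IsFactorMap {X Y : Type*} [TopologicalSpace X] [TopologicalSpace Y]
    (f : X → X) (g : Y → Y) (h : X → Y) : Prop :=
  Continuous h ∧ Surjective h ∧ h ∘ f = g ∘ h

/-- A map `h` is almost 1-1 if the set of points of the target having exactly one
preimage is dense. -/
def AlmostOneOne {X Y : Type*} [TopologicalSpace Y] (h : X → Y) : Prop :=
  Dense {y : Y | ∃! x, h x = y}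

/-- A witness that the system `(X, f)` is almost automorphic: an almost periodic
homeomorphism of a compact metric space which is an almost 1-1 factor of `(X, f)`. -/
structure AAWitness {X : Type*} [TopologicalSpace X] (f : X → X) where
  (Y : Type)
  [mY : MetricSpace Y]
  [cY : CompactSpace Y]
  (g : Y ≃ₜ Y)
  (hmap : X → Y)
  (factor : IsFactorMap f (⇑g) hmap)
  (a11 : AlmostOneOne hmap)
  (ap : ∀ ε > (0 : ℝ), ∃ δ > (0 : ℝ), ∀ y y' : Y, dist y y' < δ →
        ∀ n : ℤ, dist (zIter g.toEquiv n y) (zIter g.toEquiv n y') < ε)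

/-- `M` is a minimal set of `f`: nonempty, closed, invariant, and without proper
nonempty closed invariant subsets. -/
def IsMinimalSet {X : Type*} [TopologicalSpace X] (f : X → X) (M : Set X) : Prop :=
  M.Nonempty ∧ IsClosed M ∧ f '' M = M ∧
    ∀ M' ⊆ M, M'.Nonempty → IsClosed M' → f '' M' ⊆ M' → M' = M

/-- The restriction of `f` to an invariant set. -/
def restrictMap {X : Type*} {f : X → X} {M : Set X} (hM : Set.MapsTo f M M) : ↥M → ↥M :=
  Set.MapsTo.restrict f M M hM

/-- `M` is an almost automorphic minimal set of `f`: `f` restricted to `M` admits an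
almost periodic almost 1-1 factor. -/
def IsAAMinimal {X : Type*} [MetricSpace X] (f : X → X) (M : Set X) : Prop :=
  IsMinimalSet f M ∧ ∀ hM : Set.MapsTo f M M, Nonempty (AAWitness (restrictMap hM))

/-- `M` is an almost periodic minimal set of `f`: the family of iterates of the
restriction of `f` to `M` is equicontinuous. -/
def IsAPMinimal {X : Type*} [MetricSpace X] (f : X → X) (M : Set X) : Prop :=
  IsMinimalSet f M ∧ ∀ hM : Set.MapsTo f M M, AlmostPeriodicMap (restrictMap hM)

/-- A subset of a product is pinched if some fibre is a singleton. -/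
def Pinched {Θ X : Type*} (A : Set (Θ × X)) : Prop := ∃ θ : Θ, ∃! x : X, (θ, x) ∈ A

/-- An `α`-forced increasing interval map on `Θ × I`: a continuous skew product over `α`
whose fibre maps are strictly increasing. -/
def ForcedIncreasing {Θ : Type*} [TopologicalSpace Θ] {I : Set ℝ} (α : Θ → Θ)
    (f : Θ × ↥I → Θ × ↥I) : Prop :=
  Continuous f ∧ (∀ p : Θ × ↥I, (f p).1 = α p.1) ∧
    ∀ θ : Θ, StrictMono fun x : ↥I => (f (θ, x)).2

/-- The fibre of `M ⊆ Θ × I` over `θ`, as a set of reals. -/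
def fiberSet {Θ : Type*} {I : Set ℝ} (M : Set (Θ × ↥I)) (θ : Θ) : Set ℝ :=
  (fun x : ↥I => (x : ℝ)) '' {x : ↥I | (θ, x) ∈ M}

/-- The filled-in envelope `[φ⁻_M, φ⁺_M]` of `M`, where `φ⁻_M(θ) = inf M_θ` and
`φ⁺_M(θ) = sup M_θ`. -/
def FilledEnvelope {Θ : Type*} {I : Set ℝ} (M : Set (Θ × ↥I)) : Set (Θ × ↥I) :=
  {p : Θ × ↥I | sInf (fiberSet M p.1) ≤ (p.2 : ℝ) ∧ (p.2 : ℝ) ≤ sSup (fiberSet M p.1)}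

/-- The graph of a curve `γ : Θ → I`. -/
def curveGraph {Θ : Type*} {I : Set ℝ} (γ : Θ → ↥I) : Set (Θ × ↥I) :=
  {p : Θ × ↥I | p.2 = γ p.1}

/-- The conclusion of the blow-up construction (properties (i)-(v) of the main theorem):
`f̂` is a topological extension of `f` via the fibre-respecting factor map `h`, `f̂` is an
`α`-forced increasing interval map, the fibre maps of `h` are non-decreasing, `h` is
injective off `h⁻¹(Γ)`, countably many points of `Γ` have non-degenerate vertical-segment
preimages while all other points of `Γ` have singleton preimages, and `h⁻¹(Γ)` contains
the graph of no continuous curve. -/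
def BlowUpConclusion {Θ : Type*} [TopologicalSpace Θ] {I : Set ℝ}
    (α : Θ → Θ) (f : Θ × ↥I → Θ × ↥I) (γ : Θ → ↥I)
    (fhat : Θ × ↥I → Θ × ↥I) (h : Θ × ↥I → Θ × ↥I) : Prop :=
  IsFactorMap fhat f h ∧ (∀ p : Θ × ↥I, (h p).1 = p.1) ∧
  ForcedIncreasing α fhat ∧
  (∀ θ : Θ, Monotone fun x : ↥I => (h (θ, x)).2) ∧
  Set.InjOn h (h ⁻¹' curveGraph γ)ᶜ ∧
  (∃ C : Set (Θ × ↥I), C ⊆ curveGraph γ ∧ C.Countable ∧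
    (∀ p ∈ C, ∃ x₁ x₂ : ↥I, x₁ < x₂ ∧ h ⁻¹' {p} = {p.1} ×ˢ Set.Icc x₁ x₂) ∧
    (∀ p ∈ curveGraph γ \ C, ∃ x : ↥I, h ⁻¹' {p} = {(p.1, x)})) ∧
  (∀ η : Θ → ↥I, Continuous η → ¬ (curveGraph η ⊆ h ⁻¹' curveGraph γ))


/-! ### Construction -/

namespace BlowUp

open Filter Topology

/-- The rotation number on the circle. -/
def rot : T1 := ((√2 : ℝ) : T1)

/-- Summable positive weights. -/
def wt : ℤ → ℝ := (posSumOfEncodable (one_pos : (0 : ℝ) < 1) ℤ).1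

lemma wt_pos (n : ℤ) : 0 < wt n := (posSumOfEncodable (one_pos : (0 : ℝ) < 1) ℤ).2.1 n

lemma wt_summable : Summable wt := by
  obtain ⟨c, hc, -⟩ := (posSumOfEncodable (one_pos : (0 : ℝ) < 1) ℤ).2.2
  exact hc.summable

lemma wt_tsum : ∑' n, wt n ≤ 1 := by
  obtain ⟨c, hc, h⟩ := (posSumOfEncodable (one_pos : (0 : ℝ) < 1) ℤ).2.2
  exact hc.tsum_eq.trans_le h

/-- Distance to the `n`-th point of the singular orbit. -/
def rr (n : ℤ) (θ : T1) : ℝ := ‖θ - n • rot‖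

lemma rr_nonneg (n : ℤ) (θ : T1) : 0 ≤ rr n θ := norm_nonneg _

lemma rr_cont (n : ℤ) : Continuous (rr n) := by
  unfold rr; fun_prop

lemma rr_le (n : ℤ) (θ : T1) : rr n θ ≤ 1 / 2 := by
  have := AddCircle.norm_le_half_period (1 : ℝ) (x := θ - n • rot) one_ne_zero
  simpa [rr] using this

lemma rr_add (n : ℤ) (θ : T1) : rr n (θ + rot) = rr (n - 1) θ := by
  unfold rr
  congr 1
  rw [sub_smul, one_smul]; abel

lemma irr : Irrational (√2) := irrational_sqrt_two

lemma dense_z : DenseRange (fun n : ℤ => n • rot) := by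
  have := (AddCircle.denseRange_zsmul_coe_iff (a := √2) (p := 1)).2 (by simpa using irr)
  exact this

lemma dense_n : DenseRange (fun n : ℕ => n • rot) :=
  denseRange_zsmul_iff_nsmul.1 dense_z

lemma rot_inj {n m : ℤ} (h : n • rot = m • rot) : n = m := by
  have h0 : addOrderOf rot = 0 := AddCircle.denseRange_zsmul_iff.1 dense_z
  have h1 : (n - m) • rot = 0 := by rw [sub_smul, h, sub_self]
  rw [← addOrderOf_dvd_iff_zsmul_eq_zero, h0] at h1
  simp at h1
  omega

/-- The points off the singular orbit. -/
def Off : Set T1 := {θ | ∀ n : ℤ, θ ≠ n • rot}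

lemma off_rr {θ : T1} (h : θ ∈ Off) (n : ℤ) : 0 < rr n θ :=
  norm_pos_iff.2 (sub_ne_zero.2 (h n))

lemma off_add {θ : T1} (h : θ ∈ Off) (m : ℤ) : θ + m • rot ∈ Off := by
  intro n hn
  apply h (n - m)
  rw [sub_smul, ← hn, add_sub_cancel_right]

lemma off_ex : (((1 / 2 : ℝ) : ℝ) : T1) ∈ Off := by
  intro n hn
  have h2 : (((1 / 2 : ℝ) : ℝ) : T1) + (((1 / 2 : ℝ) : ℝ) : T1) = 0 := by
    rw [← AddCircle.coe_add]
    norm_num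
  have h3 : (n + n) • rot = (0 : ℤ) • rot := by
    rw [add_smul, ← hn, h2, zero_smul]
  have h4 := rot_inj h3
  have : n = 0 := by omega
  subst this
  rw [zero_smul] at hn
  have := (AddCircle.coe_eq_zero_iff_of_mem_Ico (p := (1 : ℝ)) (a := 1 / 2)
    (by constructor <;> norm_num)).1 hn
  norm_num at this

lemma off_dense : Dense Off := by
  have h : DenseRange (fun n : ℤ => (((1 / 2 : ℝ) : ℝ) : T1) + n • rot) :=
    (Homeomorph.addLeft (((1 / 2 : ℝ) : ℝ) : T1)).surjective.denseRange.comp dense_z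
      (Homeomorph.addLeft (((1 / 2 : ℝ) : ℝ) : T1)).continuous
  refine h.mono ?_
  rintro _ ⟨n, rfl⟩
  exact off_add off_ex n

/-- Continuity by squeezing at the zeros of `r`. -/
lemma cont_squeeze {X : Type*} [TopologicalSpace X] {P r : X → ℝ} (hr : Continuous r)
    (hb : ∀ x, |P x| ≤ r x) (hc : ∀ x, r x ≠ 0 → ContinuousAt P x) : Continuous P := by
  rw [continuous_iff_continuousAt]
  intro x
  by_cases h : r x = 0
  · have hP : P x = 0 := by
      have := hb x
      rw [h] at this
      exact abs_nonpos_iff.1 this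
    unfold ContinuousAt
    rw [hP]
    apply squeeze_zero_norm hb
    have := hr.tendsto x
    rwa [h] at this
  · exact hc x h

lemma rsin_cont (n : ℤ) : Continuous (fun θ => rr n θ * Real.sin (1 / rr n θ)) := by
  refine cont_squeeze (rr_cont n) (fun θ => ?_) (fun θ h => ?_)
  · rw [abs_mul, abs_of_nonneg (rr_nonneg n θ)]
    exact mul_le_of_le_one_right (rr_nonneg n θ) (Real.abs_sin_le_one _)
  · have := (rr_cont n).continuousAt (x := θ)
    exact this.mul (Real.continuous_sin.continuousAt.comp (continuousAt_const.div this h))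

/-- Mixing coefficient. -/
def mm (r y : ℝ) : ℝ := r * |y| / (|y| + r + r * |y|)

lemma mm_nonneg {r : ℝ} (hr : 0 ≤ r) (y : ℝ) : 0 ≤ mm r y := by
  unfold mm; positivity

lemma mm_le {r : ℝ} (hr : 0 ≤ r) (y : ℝ) : mm r y ≤ r := by
  unfold mm
  apply div_le_of_le_mul₀ (by positivity) hr
  have := abs_nonneg y
  nlinarith [mul_nonneg hr this, mul_nonneg hr hr, mul_nonneg hr (mul_nonneg hr this)]

lemma mm_contAt {X : Type*} [TopologicalSpace X] {r y : X → ℝ} (hr : Continuous r)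
    (h0 : ∀ x, 0 ≤ r x) (hy : Continuous y) (x : X) (h : r x ≠ 0) :
    ContinuousAt (fun x => mm (r x) (y x)) x := by
  unfold mm
  have hp : 0 < r x := lt_of_le_of_ne (h0 x) (Ne.symm h)
  have h2 : |y x| + r x + r x * |y x| ≠ 0 := by positivity
  exact ContinuousAt.div (by fun_prop) (by fun_prop) h2

lemma mm_cont {X : Type*} [TopologicalSpace X] {r y : X → ℝ} (hr : Continuous r)
    (h0 : ∀ x, 0 ≤ r x) (hy : Continuous y) : Continuous (fun x => mm (r x) (y x)) := by
  refine cont_squeeze hr (fun x => ?_) (fun x h => mm_contAt hr h0 hy x h)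
  rw [abs_of_nonneg (mm_nonneg (h0 x) _)]
  exact mm_le (h0 x) _

lemma mmsin_cont {X : Type*} [TopologicalSpace X] {r y : X → ℝ} (hr : Continuous r)
    (h0 : ∀ x, 0 ≤ r x) (hy : Continuous y) :
    Continuous (fun x => mm (r x) (y x) * Real.sin (1 / r x)) := by
  refine cont_squeeze hr (fun x => ?_) (fun x h => ?_)
  · rw [abs_mul, abs_of_nonneg (mm_nonneg (h0 x) _)]
    exact (mul_le_of_le_one_right (mm_nonneg (h0 x) _) (Real.abs_sin_le_one _)).trans
      (mm_le (h0 x) _)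
  · exact (mm_contAt hr h0 hy x h).mul
      (Real.continuous_sin.continuousAt.comp (continuousAt_const.div hr.continuousAt h))

/-- The ambient space of the blow-up. -/
abbrev Amb := T1 × ℝ × (ℤ → ℝ)

/-- The blown-up phase space. -/
def Bset : Set Amb :=
  {z | |z.2.1| ≤ 4 ∧ ∀ n, |z.2.2 n| ≤ 1 ∧
    z.2.2 n * (|z.2.1| + rr n z.1) = z.2.1 + rr n z.1 * Real.sin (1 / rr n z.1)}

lemma Bset_closed : IsClosed Bset := by
  unfold Bset
  simp only [Set.ofPred_and, Set.ofPred_forall]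
  refine (isClosed_le (by fun_prop) (by fun_prop)).inter (isClosed_iInter fun n => ?_)
  have h1 : Continuous fun z : Amb => rr n z.1 := (rr_cont n).comp continuous_fst
  have h2 : Continuous fun z : Amb => rr n z.1 * Real.sin (1 / rr n z.1) :=
    (rsin_cont n).comp continuous_fst
  have h3 : Continuous fun z : Amb => z.2.2 n := by fun_prop
  exact (isClosed_le (by fun_prop) (by fun_prop)).inter (isClosed_eq (by fun_prop) (by fun_prop))

lemma Bset_compact : IsCompact Bset := by
  have hK : IsCompact ((univ : Set T1) ×ˢ (Icc (-4 : ℝ) 4) ×ˢ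
      (Set.pi univ fun _ : ℤ => Icc (-1 : ℝ) 1)) :=
    isCompact_univ.prod (isCompact_Icc.prod (isCompact_univ_pi fun _ => isCompact_Icc))
  refine hK.of_isClosed_subset Bset_closed ?_
  rintro ⟨θ, y, κ⟩ ⟨h1, h2⟩
  exact ⟨trivial, abs_le.1 h1, fun n _ => abs_le.1 (h2 n).1⟩

instance : CompactSpace Bset := isCompact_iff_compactSpace.1 Bset_compact

/-- The fibre coordinate. -/
def xx (z : Amb) : ℝ := z.2.1 + ∑' n, wt n * z.2.2 n

lemma wk_bound {κ : ℤ → ℝ} (h : ∀ n, |κ n| ≤ 1) (n : ℤ) : ‖wt n * κ n‖ ≤ wt n := by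
  rw [norm_mul, Real.norm_of_nonneg (wt_pos n).le]
  exact mul_le_of_le_one_right (wt_pos n).le (h n)

lemma wk_summable {κ : ℤ → ℝ} (h : ∀ n, |κ n| ≤ 1) : Summable fun n => wt n * κ n :=
  Summable.of_norm_bounded wt_summable (wk_bound h)

lemma wk_tsum {κ : ℤ → ℝ} (h : ∀ n, |κ n| ≤ 1) : |∑' n, wt n * κ n| ≤ 1 :=
  (tsum_of_norm_bounded wt_summable.hasSum (wk_bound h)).trans wt_tsum

lemma xx_cont : Continuous fun z : Bset => xx z.1 := by
  unfold xx
  refine (by fun_prop : Continuous fun z : Bset => z.1.2.1).add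
    (continuous_tsum (fun n => ?_) wt_summable (fun n z => wk_bound (fun m => (z.2.2 m).1) n))
  fun_prop

/-- The dynamics on the blown-up space. -/
def FF (z : Amb) : Amb :=
  (z.1 + rot, z.2.1 / (1 + |z.2.1|), fun n =>
    z.2.2 (n - 1) * (1 - mm (rr (n - 1) z.1) z.2.1)
      + mm (rr (n - 1) z.1) z.2.1 * Real.sin (1 / rr (n - 1) z.1))

lemma FF_cont : Continuous FF := by
  unfold FF
  refine (by fun_prop : Continuous fun z : Amb => z.1 + rot).prodMk
    (Continuous.prodMk ?_ (continuous_pi fun n => ?_))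
  · exact Continuous.div (by fun_prop) (by fun_prop) (fun z => by positivity)
  · have hr : Continuous fun z : Amb => rr (n - 1) z.1 := (rr_cont _).comp continuous_fst
    have hy : Continuous fun z : Amb => z.2.1 := by fun_prop
    have h1 := mm_cont hr (fun z => rr_nonneg _ _) hy
    have h2 := mmsin_cont hr (fun z => rr_nonneg _ _) hy
    have h3 : Continuous fun z : Amb => z.2.2 (n - 1) := by fun_prop
    exact (h3.mul (continuous_const.sub h1)).add h2

lemma G_lt (y : ℝ) : |y / (1 + |y|)| < 1 := by
  rw [abs_div, abs_of_pos (by positivity : 0 < 1 + |y|), div_lt_one (by positivity)]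
  linarith

lemma FF_mem {z : Amb} (hz : z ∈ Bset) : FF z ∈ Bset := by
  obtain ⟨θ, y, κ⟩ := z
  obtain ⟨h1, h2⟩ := hz
  refine ⟨?_, fun n => ?_⟩
  · have := G_lt y
    simp only [FF]; linarith
  · obtain ⟨hk, he⟩ := h2 (n - 1)
    simp only [FF, rr_add] at *
    set r := rr (n - 1) θ with hr
    have hr0 : 0 ≤ r := rr_nonneg _ _
    have hr1 : r ≤ 1 / 2 := rr_le _ _
    set w := Real.sin (1 / r)
    have hw : |w| ≤ 1 := Real.abs_sin_le_one _
    have hm0 := mm_nonneg hr0 y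
    have hm1 := mm_le hr0 y
    constructor
    · rw [abs_le] at *
      constructor <;> nlinarith
    · rw [abs_div, abs_of_pos (by positivity : 0 < 1 + |y|)]
      have hy := abs_nonneg y
      by_cases hd : |y| + r + r * |y| = 0
      · have h3 : |y| = 0 := by nlinarith [mul_nonneg hr0 hy]
        have h4 : r = 0 := by nlinarith [mul_nonneg hr0 hy]
        simp [abs_eq_zero.1 h3, h4]
      · have hm : mm r y * (|y| + r + r * |y|) = r * |y| := by
          unfold mm; exact div_mul_cancel₀ _ hd
        have hp : 0 < 1 + |y| := by positivity
        field_simp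
        linear_combination he + (w - κ (n - 1)) * hm

lemma mono_k {y y' r s κ κ' : ℝ} (hr : 0 ≤ r) (hs : |s| ≤ r) (hk : |κ| ≤ 1) (hk' : |κ'| ≤ 1)
    (h : κ * (|y| + r) = y + s) (h' : κ' * (|y'| + r) = y' + s) (hy : y < y') : κ ≤ κ' := by
  rw [abs_le] at hk hk' hs
  have hya := abs_nonneg y
  have hya' := abs_nonneg y'
  rcases (add_nonneg hya hr).eq_or_lt with hD | hD
  · have h1 : |y| = 0 := by linarith
    have h2 : r = 0 := by linarith
    have h3 : s = 0 := by linarith [hs.1, hs.2]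
    have h4 := abs_eq_zero.1 h1
    subst h4 h2 h3
    rw [abs_of_pos hy] at h'
    have : κ' = 1 := by
      have : y' ≠ 0 := hy.ne'
      field_simp at h'
      linarith
    linarith
  rcases (add_nonneg hya' hr).eq_or_lt with hD' | hD'
  · have h1 : |y'| = 0 := by linarith
    have h2 : r = 0 := by linarith
    have h3 : s = 0 := by linarith [hs.1, hs.2]
    have h4 := abs_eq_zero.1 h1
    subst h4 h2 h3
    rw [abs_of_neg hy] at h
    have : (κ + 1) * y = 0 := by linarith
    rcases mul_eq_zero.1 this with h5 | h5
    · linarith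
    · exact absurd h5 hy.ne
  have key : 0 ≤ (y' + s) * (|y| + r) - (y + s) * (|y'| + r) := by
    have e1 : 0 ≤ y' * |y| - y * |y'| := by
      rcases abs_cases y with ⟨a1, a2⟩ | ⟨a1, a2⟩ <;> rcases abs_cases y' with ⟨b1, b2⟩ | ⟨b1, b2⟩ <;>
        rw [a1, b1] <;> nlinarith
    have e2 : 0 ≤ r * (y' - y) + s * (|y| - |y'|) := by
      have := abs_abs_sub_abs_le_abs_sub y y'
      rw [abs_sub_comm y y', abs_of_pos (sub_pos.2 hy), abs_le] at this
      nlinarith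
    nlinarith
  rw [← h, ← h'] at key
  have : 0 ≤ (κ' - κ) * ((|y| + r) * (|y'| + r)) := by linarith
  have := nonneg_of_mul_nonneg_left this (mul_pos hD hD')
  linarith

lemma rsin_le (n : ℤ) (θ : T1) : |rr n θ * Real.sin (1 / rr n θ)| ≤ rr n θ := by
  rw [abs_mul, abs_of_nonneg (rr_nonneg n θ)]
  exact mul_le_of_le_one_right (rr_nonneg n θ) (Real.abs_sin_le_one _)

lemma mono_of_lt {z z' : Amb} (hz : z ∈ Bset) (hz' : z' ∈ Bset) (hθ : z.1 = z'.1)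
    (hy : z.2.1 < z'.2.1) (n : ℤ) : z.2.2 n ≤ z'.2.2 n := by
  have h := hz.2 n
  have h' := hz'.2 n
  rw [← hθ] at h'
  exact mono_k (rr_nonneg _ _) (rsin_le _ _) h.1 h'.1 h.2 h'.2 hy

lemma tsum_mono {z z' : Amb} (hz : z ∈ Bset) (hz' : z' ∈ Bset)
    (h : ∀ n, z.2.2 n ≤ z'.2.2 n) :
    ∑' n, wt n * z.2.2 n ≤ ∑' n, wt n * z'.2.2 n :=
  Summable.tsum_le_tsum (fun n => mul_le_mul_of_nonneg_left (h n) (wt_pos n).le)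
    (wk_summable fun n => (hz.2 n).1) (wk_summable fun n => (hz'.2 n).1)

lemma order {z z' : Amb} (hz : z ∈ Bset) (hz' : z' ∈ Bset) (hθ : z.1 = z'.1)
    (hx : xx z ≤ xx z') : z.2.1 ≤ z'.2.1 ∧ ∀ n, z.2.2 n ≤ z'.2.2 n := by
  have hy : z.2.1 ≤ z'.2.1 := by
    by_contra! hy
    have := tsum_mono hz' hz (mono_of_lt hz' hz hθ.symm hy)
    unfold xx at hx
    linarith
  refine ⟨hy, ?_⟩
  rcases hy.eq_or_lt with hy | hy
  swap
  · exact mono_of_lt hz hz' hθ hy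
  have hne : ∀ n, |z.2.1| + rr n z.1 ≠ 0 → z.2.2 n = z'.2.2 n := by
    intro n hn
    have h := (hz.2 n).2
    have h' := (hz'.2 n).2
    rw [← hθ, ← hy, ← h] at h'
    exact (mul_right_cancel₀ hn h').symm
  intro n
  by_cases hn : |z.2.1| + rr n z.1 = 0
  swap
  · exact (hne n hn).le
  have hrn : rr n z.1 = 0 := by linarith [abs_nonneg z.2.1, rr_nonneg n z.1]
  have hother : ∀ m, m ≠ n → z.2.2 m = z'.2.2 m := by
    intro m hm
    apply hne
    have : rr m z.1 ≠ 0 := by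
      intro h0
      apply hm
      rw [rr, norm_eq_zero, sub_eq_zero] at h0 hrn
      exact rot_inj (h0.symm.trans hrn)
    have h1 : 0 < rr m z.1 := lt_of_le_of_ne (rr_nonneg _ _) this.symm
    positivity
  by_contra! hlt
  have : ∑' n, wt n * z'.2.2 n < ∑' n, wt n * z.2.2 n := by
    refine Summable.tsum_lt_tsum (i := n) (fun m => ?_)
      (mul_lt_mul_of_pos_left hlt (wt_pos n))
      (wk_summable fun n => (hz'.2 n).1) (wk_summable fun n => (hz.2 n).1)
    by_cases hm : m = n
    · subst hm; exact mul_le_mul_of_nonneg_left hlt.le (wt_pos m).le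
    · rw [hother m hm]
  unfold xx at hx
  linarith

/-- The projection of the blown-up space. -/
def pr (z : Bset) : T1 × ℝ := (z.1.1, xx z.1)

lemma pr_cont : Continuous pr :=
  (continuous_fst.comp continuous_subtype_val).prodMk xx_cont

lemma pr_inj : Injective pr := by
  intro z z' h
  have h1 : z.1.1 = z'.1.1 := (Prod.ext_iff.1 h).1
  have h2 : xx z.1 = xx z'.1 := (Prod.ext_iff.1 h).2
  have a := order z.2 z'.2 h1 h2.le
  have b := order z'.2 z.2 h1.symm h2.ge
  apply Subtype.ext
  refine Prod.ext h1 (Prod.ext (le_antisymm a.1 b.1) (funext fun n => le_antisymm (a.2 n) (b.2 n)))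

lemma pr_emb : IsClosedEmbedding pr := pr_cont.isClosedEmbedding pr_inj

/-- The explicit lift off the singular orbit. -/
def lift (θ : T1) (y : ℝ) : Amb :=
  (θ, y, fun n => (y + rr n θ * Real.sin (1 / rr n θ)) / (|y| + rr n θ))

lemma lift_mem {θ : T1} (hθ : θ ∈ Off) {y : ℝ} (hy : |y| ≤ 4) : lift θ y ∈ Bset := by
  refine ⟨hy, fun n => ?_⟩
  have hr := off_rr hθ n
  have hp : 0 < |y| + rr n θ := by positivity
  simp only [lift]
  constructor
  · rw [abs_div, abs_of_pos hp, div_le_one hp]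
    exact (abs_add_le _ _).trans (by linarith [rsin_le n θ])
  · exact div_mul_cancel₀ _ hp.ne'

lemma surj_off {θ : T1} (hθ : θ ∈ Off) {x : ℝ} (hx : x ∈ Icc (-3 : ℝ) 3) :
    (θ, x) ∈ range pr := by
  have hmem : ∀ y : Icc (-4 : ℝ) 4, lift θ y ∈ Bset := fun y => lift_mem hθ (abs_le.2 y.2)
  have hc : Continuous fun y : Icc (-4 : ℝ) 4 => (⟨lift θ y, hmem y⟩ : Bset) := by
    refine Continuous.subtype_mk ?_ _
    unfold lift
    refine continuous_const.prodMk (continuous_subtype_val.prodMk (continuous_pi fun n => ?_))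
    refine Continuous.div (by fun_prop) (by fun_prop) (fun y => ?_)
    have hr := off_rr hθ n
    positivity
  have hc2 : Continuous fun y : Icc (-4 : ℝ) 4 => xx (lift θ y) := xx_cont.comp hc
  have : PreconnectedSpace (Icc (-4 : ℝ) 4) := Subtype.preconnectedSpace isPreconnected_Icc
  have hb : ∀ y : Icc (-4 : ℝ) 4, |xx (lift θ y) - y| ≤ 1 := by
    intro y
    have := wk_tsum (fun n => ((hmem y).2 n).1)
    simpa [xx, lift] using this
  have h1 := abs_le.1 (hb ⟨-4, by norm_num⟩)
  have h2 := abs_le.1 (hb ⟨4, by norm_num⟩)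
  obtain ⟨y, hy⟩ := mem_range_of_exists_le_of_exists_ge hc2
    (c := x) ⟨⟨-4, by norm_num⟩, by simp only at h1 ⊢; linarith [hx.1]⟩
    ⟨⟨4, by norm_num⟩, by simp only at h2 ⊢; linarith [hx.2]⟩
  exact ⟨⟨lift θ y, hmem y⟩, Prod.ext rfl hy⟩

lemma surj (θ : T1) {x : ℝ} (hx : x ∈ Icc (-3 : ℝ) 3) : (θ, x) ∈ range pr := by
  have hcl : IsClosed {θ : T1 | (θ, x) ∈ range pr} :=
    pr_emb.isClosed_range.preimage (by fun_prop : Continuous fun θ : T1 => (θ, x))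
  have : closure Off ⊆ {θ : T1 | (θ, x) ∈ range pr} :=
    hcl.closure_subset_iff.2 fun θ hθ => surj_off hθ hx
  exact this (off_dense θ)

/-- The fibre interval. -/
abbrev II : Set ℝ := Icc (-3 : ℝ) 3

/-- The section of the projection. -/
def sec (p : T1 × II) : Bset := (surj p.1 p.2.2).choose

lemma pr_sec (p : T1 × II) : pr (sec p) = (p.1, (p.2 : ℝ)) := (surj p.1 p.2.2).choose_spec

lemma sec_fst (p : T1 × II) : (sec p).1.1 = p.1 := congrArg Prod.fst (pr_sec p)

lemma sec_xx (p : T1 × II) : xx (sec p).1 = p.2 := congrArg Prod.snd (pr_sec p)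

lemma sec_cont : Continuous sec := by
  rw [pr_emb.isInducing.continuous_iff]
  have : pr ∘ sec = fun p => (p.1, (p.2 : ℝ)) := funext pr_sec
  rw [this]
  fun_prop

lemma sec_inj : Injective sec := by
  intro p q h
  have := congrArg pr h
  rw [pr_sec, pr_sec] at this
  exact Prod.ext (Prod.ext_iff.1 this).1 (Subtype.ext (Prod.ext_iff.1 this).2)

/-- The lifted dynamics on the subtype. -/
def FB (z : Bset) : Bset := ⟨FF z.1, FF_mem z.2⟩

lemma FB_cont : Continuous FB := (FF_cont.comp continuous_subtype_val).subtype_mk _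

lemma FF_xx {z : Amb} (hz : z ∈ Bset) : |xx (FF z)| < 2 := by
  have h1 := wk_tsum (fun n => ((FF_mem hz).2 n).1)
  have h2 := G_lt z.2.1
  have : xx (FF z) = z.2.1 / (1 + |z.2.1|) + ∑' n, wt n * (FF z).2.2 n := rfl
  rw [this]
  exact (abs_add_le _ _).trans_lt (by linarith)

/-- The forced increasing map. -/
def fh (p : T1 × II) : T1 × II :=
  (p.1 + rot, ⟨xx (FB (sec p)).1, by
    have := abs_lt.1 (FF_xx (sec p).2)
    constructor <;> simp only [FB] <;> linarith⟩)

lemma sec_fh (p : T1 × II) : sec (fh p) = FB (sec p) := by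
  apply pr_inj
  rw [pr_sec]
  refine Prod.ext ?_ rfl
  simp [fh, pr, FB, FF, sec_fst]

lemma sec_iter (n : ℕ) (p : T1 × II) : sec (fh^[n] p) = FB^[n] (sec p) :=
  (Function.Semiconj.iterate_right sec_fh n) p

lemma fh_cont : Continuous fh := by
  refine (by fun_prop : Continuous fun p : T1 × II => p.1 + rot).prodMk ?_
  exact Continuous.subtype_mk (xx_cont.comp (FB_cont.comp sec_cont)) _

lemma G_mono : StrictMono fun y : ℝ => y / (1 + |y|) := by
  intro y y' h
  simp only
  rw [div_lt_div_iff₀ (by positivity) (by positivity)]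
  rcases abs_cases y with ⟨a1, a2⟩ | ⟨a1, a2⟩ <;> rcases abs_cases y' with ⟨b1, b2⟩ | ⟨b1, b2⟩ <;>
        rw [a1, b1] <;> nlinarith

lemma FF_le {z z' : Amb} (hz : z ∈ Bset) (hz' : z' ∈ Bset) (hθ : z.1 = z'.1)
    (hx : xx z ≤ xx z') : xx (FF z) ≤ xx (FF z') := by
  obtain ⟨hy, hk⟩ := order hz hz' hθ hx
  have h1 : (FF z).2.1 ≤ (FF z').2.1 := G_mono.monotone hy
  have h2 : ∀ n, (FF z).2.2 n ≤ (FF z').2.2 n := by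
    rcases hy.eq_or_lt with hy | hy
    · intro n
      simp only [FF]
      rw [← hy, ← hθ]
      have := mm_le (rr_nonneg (n - 1) z.1) z.2.1
      have := rr_le (n - 1) z.1
      have := hk (n - 1)
      gcongr
      linarith
    · exact mono_of_lt (FF_mem hz) (FF_mem hz') (by simp [FF, hθ]) (G_mono hy)
  have := tsum_mono (FF_mem hz) (FF_mem hz') h2
  unfold xx
  linarith

lemma FB_inj : Injective FB := by
  intro z z' h
  have h := congrArg Subtype.val h
  simp only [FB] at h
  have h1 : z.1.1 = z'.1.1 := add_right_cancel (congrArg Prod.fst h)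
  have h2 : z.1.2.1 = z'.1.2.1 := G_mono.injective (congrArg (fun q => q.2.1) h)
  apply Subtype.ext
  refine Prod.ext h1 (Prod.ext h2 (funext fun n => ?_))
  have h3 := congrArg (fun q : Amb => q.2.2 (n + 1)) h
  simp only [FF, add_sub_cancel_right] at h3
  rw [← h1, ← h2] at h3
  have := mm_le (rr_nonneg n z.1.1) z.1.2.1
  have := rr_le n z.1.1
  have h4 := add_right_cancel h3
  exact mul_right_cancel₀ (by linarith) h4

lemma fh_inj : Injective fh := by
  intro p q h
  apply sec_inj
  apply FB_inj
  rw [← sec_fh, ← sec_fh, h]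

lemma fh_forced : ForcedIncreasing (fun θ : T1 => θ + ((√2 : ℝ) : T1)) fh := by
  refine ⟨fh_cont, fun p => rfl, fun θ => ?_⟩
  refine Monotone.strictMono_of_injective ?_ ?_
  · intro x x' h
    apply Subtype.coe_le_coe.1
    refine FF_le (sec (θ, x)).2 (sec (θ, x')).2 (by rw [sec_fst, sec_fst]) ?_
    rw [sec_xx, sec_xx]
    exact h
  · intro x x' h
    have : fh (θ, x) = fh (θ, x') := Prod.ext rfl h
    exact congrArg Prod.snd (fh_inj this)

lemma iter_bound (n : ℕ) (z : Bset) : (n : ℝ) * |(FB^[n] z).1.2.1| ≤ 1 := by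
  induction n with
  | zero => simp
  | succ n ih =>
    rw [Function.iterate_succ_apply']
    set y := (FB^[n] z).1.2.1 with hy
    have : (FB (FB^[n] z)).1.2.1 = y / (1 + |y|) := rfl
    rw [this, abs_div, abs_of_pos (by positivity : 0 < 1 + |y|), mul_div_assoc',
      div_le_one (by positivity)]
    push_cast
    linarith

/-- The global attractor. -/
abbrev att : Set (T1 × II) := ⋂ n : ℕ, fh^[n] '' Set.univ

lemma lift_zero {z : Bset} (h : z.1.2.1 = 0) : ∃ q : T1 × II, sec q = z := by
  have h1 := abs_le.1 (wk_tsum (fun n => (z.2.2 n).1))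
  have h2 : xx z.1 ∈ II := by
    unfold xx
    rw [h]
    constructor <;> linarith [h1.1, h1.2]
  refine ⟨(z.1.1, ⟨xx z.1, h2⟩), ?_⟩
  apply pr_inj
  rw [pr_sec]
  rfl

lemma back {p : T1 × II} (h : (sec p).1.2.1 = 0) :
    ∃ q : T1 × II, fh q = p ∧ (sec q).1.2.1 = 0 := by
  have hz : (((sec p).1.1 - rot, 0, fun n => (sec p).1.2.2 (n + 1)) : Amb) ∈ Bset := by
    refine ⟨by simp, fun n => ?_⟩
    have h2 := (sec p).2.2 (n + 1)
    have h3 := rr_add (n + 1) ((sec p).1.1 - rot)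
    rw [sub_add_cancel, add_sub_cancel_right] at h3
    rw [h, h3] at h2
    exact h2
  obtain ⟨q, hq⟩ := lift_zero (z := ⟨_, hz⟩) rfl
  refine ⟨q, ?_, by rw [hq]⟩
  apply sec_inj
  rw [sec_fh, hq]
  apply Subtype.ext
  refine Prod.ext ?_ (Prod.ext ?_ (funext fun n => ?_))
  · simp [FB, FF]
  · simp [FB, FF, h]
  · simp [FB, FF, mm]

lemma att_iff (p : T1 × II) : p ∈ att ↔ (sec p).1.2.1 = 0 := by
  constructor
  · intro h
    have h1 : ∀ n : ℕ, (n : ℝ) * |(sec p).1.2.1| ≤ 1 := by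
      intro n
      obtain ⟨q, -, hq⟩ := mem_iInter.1 h n
      rw [← hq, sec_iter]
      exact iter_bound n _
    by_contra h0
    have hpos : 0 < |(sec p).1.2.1| := abs_pos.2 h0
    obtain ⟨n, hn⟩ := exists_nat_gt (1 / |(sec p).1.2.1|)
    rw [div_lt_iff₀ hpos] at hn
    linarith [h1 n]
  · intro h
    refine mem_iInter.2 fun n => ?_
    induction n generalizing p with
    | zero => simp
    | succ n ih =>
      obtain ⟨q, hq, hq0⟩ := back h
      obtain ⟨q', -, hq'⟩ := ih q hq0
      exact ⟨q', trivial, by rw [Function.iterate_succ_apply', hq', hq]⟩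

lemma att_closed : IsClosed att := by
  have : att = {p | (sec p).1.2.1 = 0} := Set.ext att_iff
  rw [this]
  have := sec_cont
  exact isClosed_eq (by fun_prop) continuous_const

lemma att_ex (θ : T1) : ∃ x : II, (θ, x) ∈ att := by
  have hz : ((θ, 0, fun n => Real.sin (1 / rr n θ)) : Amb) ∈ Bset := by
    refine ⟨by simp, fun n => ⟨Real.abs_sin_le_one _, ?_⟩⟩
    simp only [abs_zero]
    ring
  obtain ⟨q, hq⟩ := lift_zero (z := ⟨_, hz⟩) rfl
  have h1 : q.1 = θ := by rw [← sec_fst, hq]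
  refine ⟨q.2, ?_⟩
  rw [← h1]
  exact (att_iff q).2 (by rw [hq])

lemma att_sin {p : T1 × II} (hp : p ∈ att) (n : ℤ) (h : rr n p.1 ≠ 0) :
    (sec p).1.2.2 n = Real.sin (1 / rr n p.1) := by
  have h1 := ((sec p).2.2 n).2
  rw [(att_iff p).1 hp, sec_fst, abs_zero, zero_add, zero_add, mul_comm] at h1
  exact mul_left_cancel₀ h h1

lemma att_unique {p q : T1 × II} (hp : p ∈ att) (hq : q ∈ att) (h : p.1 = q.1)
    (ho : p.1 ∈ Off) : p = q := by
  apply sec_inj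
  apply Subtype.ext
  refine Prod.ext (by rw [sec_fst, sec_fst, h]) (Prod.ext ?_ (funext fun n => ?_))
  · rw [(att_iff p).1 hp, (att_iff q).1 hq]
  · rw [att_sin hp n (off_rr ho n).ne', att_sin hq n (h ▸ (off_rr ho n).ne'), h]

lemma att_pinched : Pinched att := by
  obtain ⟨x, hx⟩ := att_ex (((1 / 2 : ℝ) : ℝ) : T1)
  refine ⟨_, x, hx, fun x' hx' => ?_⟩
  exact (Prod.ext_iff.1 (att_unique hx' hx rfl off_ex)).2

lemma fh_att {p : T1 × II} : fh p ∈ att ↔ p ∈ att := by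
  rw [att_iff, att_iff, sec_fh]
  have : (FB (sec p)).1.2.1 = (sec p).1.2.1 / (1 + |(sec p).1.2.1|) := rfl
  rw [this, div_eq_zero_iff]
  constructor
  · rintro (h | h)
    · exact h
    · have : 0 < 1 + |(sec p).1.2.1| := by positivity
      exact absurd h this.ne'
  · exact Or.inl

lemma osc {g : T1 → ℝ} (hg : Continuous g) (h : ∀ θ : T1, θ ≠ 0 → g θ = Real.sin (1 / ‖θ‖))
    {b : ℝ} (hb : 2 ≤ b) : g 0 = Real.sin b := by
  have hpi := Real.pi_pos
  let u : ℕ → ℝ := fun j => 1 / (b + j * (2 * Real.pi))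
  have hpos : ∀ j : ℕ, 2 ≤ b + j * (2 * Real.pi) := fun j => by
    have : 0 ≤ (j : ℝ) * (2 * Real.pi) := by positivity
    linarith
  have hu : Tendsto u atTop (𝓝 0) := by
    simp only [u, one_div]
    refine tendsto_inv_atTop_zero.comp (tendsto_atTop_add_const_left _ _ ?_)
    exact tendsto_natCast_atTop_atTop.atTop_mul_const (by positivity)
  have hu2 : Tendsto (fun j => ((u j : ℝ) : T1)) atTop (𝓝 ((0 : ℝ) : T1)) :=
    ((AddCircle.continuous_mk' (1 : ℝ)).tendsto 0).comp hu
  have h3 : Tendsto (fun j => g ((u j : ℝ) : T1)) atTop (𝓝 (g 0)) :=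
    (hg.tendsto _).comp hu2
  have h4 : ∀ j, g ((u j : ℝ) : T1) = Real.sin b := by
    intro j
    have hj := hpos j
    have hup : 0 < u j := by simp only [u]; positivity
    have hn : ‖((u j : ℝ) : T1)‖ = u j := by
      rw [(AddCircle.norm_coe_eq_abs_iff (1 : ℝ) one_ne_zero).2, abs_of_pos hup]
      rw [abs_of_pos hup, abs_one]
      exact one_div_le_one_div_of_le (by norm_num) hj
    rw [h, hn]
    · simp only [u, one_div_one_div]
      exact Real.sin_add_nat_mul_two_pi b j
    · rw [← norm_pos_iff, hn]; exact hup
  simp only [h4] at h3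
  exact tendsto_nhds_unique h3 tendsto_const_nhds

lemma no_curve (η : T1 → II) (hη : Continuous η) : fh '' curveGraph η ≠ curveGraph η := by
  intro h
  have hit : ∀ n : ℕ, fh^[n] '' curveGraph η = curveGraph η := by
    intro n
    induction n with
    | zero => simp
    | succ n ih => rw [Function.iterate_succ', image_comp, ih, h]
  have hsub : ∀ θ, (θ, η θ) ∈ att := by
    intro θ
    refine mem_iInter.2 fun n => ?_
    have : (θ, η θ) ∈ fh^[n] '' curveGraph η := by rw [hit n]; rfl
    exact image_mono (subset_univ _) this
  have hc : Continuous fun θ => (sec (θ, η θ)).1.2.2 0 := by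
    have h1 : Continuous fun z : Bset => z.1.2.2 0 := by fun_prop
    exact h1.comp (sec_cont.comp (by fun_prop))
  have hs : ∀ θ : T1, θ ≠ 0 → (sec (θ, η θ)).1.2.2 0 = Real.sin (1 / ‖θ‖) := by
    intro θ hθ
    have hr : rr 0 θ = ‖θ‖ := by simp [rr]
    have := att_sin (hsub θ) 0 (by rw [hr]; exact norm_ne_zero_iff.2 hθ)
    rw [hr] at this
    exact this
  have hpi := Real.pi_gt_three
  have e1 := osc hc hs (b := Real.pi / 2 + 2 * Real.pi) (by linarith)
  have e2 := osc hc hs (b := -(Real.pi / 2) + 2 * Real.pi) (by linarith)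
  rw [Real.sin_add_two_pi, Real.sin_pi_div_two] at e1
  rw [Real.sin_add_two_pi, Real.sin_neg, Real.sin_pi_div_two] at e2
  linarith

/-- The regular part of the attractor. -/
def SS : Set (T1 × II) := {p | p ∈ att ∧ p.1 ∈ Off}

/-- The minimal set. -/
def MM : Set (T1 × II) := closure SS

lemma MM_sub : MM ⊆ att := att_closed.closure_subset_iff.2 fun _ h => h.1

lemma fh_SS : fh '' SS = SS := by
  apply Subset.antisymm
  · rintro _ ⟨p, hp, rfl⟩
    refine ⟨fh_att.2 hp.1, ?_⟩
    simpa [fh] using off_add hp.2 1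
  · intro p hp
    obtain ⟨q, hq, -⟩ := back ((att_iff p).1 hp.1)
    refine ⟨q, ⟨fh_att.1 (hq ▸ hp.1), ?_⟩, hq⟩
    have : q.1 = p.1 + (-1 : ℤ) • rot := by
      rw [← hq]; simp [fh]
    rw [this]
    exact off_add hp.2 _

lemma fh_MM : fh '' MM = MM := by
  unfold MM
  rw [image_closure_of_isCompact isClosed_closure.isCompact fh_cont.continuousOn, fh_SS]

lemma proj_full {M' : Set (T1 × II)} (hne : M'.Nonempty) (hcl : IsClosed M')
    (hinv : fh '' M' ⊆ M') (θ : T1) : ∃ x : II, (θ, x) ∈ M' := by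
  obtain ⟨p, hp⟩ := hne
  have hit : ∀ n : ℕ, ∃ x : II, (p.1 + n • rot, x) ∈ M' := by
    intro n
    induction n with
    | zero => exact ⟨p.2, by simpa using hp⟩
    | succ n ih =>
      obtain ⟨x, hx⟩ := ih
      refine ⟨(fh (p.1 + n • rot, x)).2, ?_⟩
      have : (p.1 + (n + 1) • rot, (fh (p.1 + n • rot, x)).2) = fh (p.1 + n • rot, x) := by
        refine Prod.ext ?_ rfl
        simp only [fh, add_smul, one_smul, add_assoc]
      rw [this]
      exact hinv ⟨_, hx, rfl⟩
  have hd : DenseRange (fun n : ℕ => p.1 + n • rot) :=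
    (Homeomorph.addLeft p.1).surjective.denseRange.comp dense_n
      (Homeomorph.addLeft p.1).continuous
  have hc : IsClosed (Prod.fst '' M') := (hcl.isCompact.image continuous_fst).isClosed
  have : closure (range fun n : ℕ => p.1 + n • rot) ⊆ Prod.fst '' M' := by
    refine hc.closure_subset_iff.2 ?_
    rintro _ ⟨n, rfl⟩
    obtain ⟨x, hx⟩ := hit n
    exact ⟨_, hx, rfl⟩
  obtain ⟨q, hq, rfl⟩ := this (hd θ)
  exact ⟨q.2, hq⟩

lemma MM_le {M' : Set (T1 × II)} (hsub : M' ⊆ att) (hne : M'.Nonempty) (hcl : IsClosed M')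
    (hinv : fh '' M' ⊆ M') : MM ⊆ M' := by
  refine hcl.closure_subset_iff.2 ?_
  intro p hp
  obtain ⟨x, hx⟩ := proj_full hne hcl hinv p.1
  rw [att_unique hp.1 (hsub hx) rfl hp.2]
  exact hx

lemma MM_ne : MM.Nonempty := by
  obtain ⟨x, hx⟩ := att_ex (((1 / 2 : ℝ) : ℝ) : T1)
  exact ⟨_, subset_closure ⟨hx, off_ex⟩⟩

lemma MM_min : IsMinimalSet fh MM :=
  ⟨MM_ne, isClosed_closure, fh_MM, fun _ hs hne hcl hinv =>
    hs.antisymm (MM_le (hs.trans MM_sub) hne hcl hinv)⟩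

lemma rot_iter (n : ℤ) (θ : T1) :
    zIter (Homeomorph.addRight rot).toEquiv n θ = θ + n • rot := by
  have : (Homeomorph.addRight rot).toEquiv = Equiv.addRight rot := rfl
  rw [zIter, this]
  simp

lemma MM_aa : IsAAMinimal fh MM := by
  refine ⟨MM_min, fun hM => ⟨{
    Y := T1
    g := Homeomorph.addRight rot
    hmap := fun p => p.1.1
    factor := ⟨by fun_prop, fun θ => ?_, rfl⟩
    a11 := ?_
    ap := ?_ }⟩⟩
  · obtain ⟨x, hx⟩ := proj_full MM_ne isClosed_closure fh_MM.subset θ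
    exact ⟨⟨_, hx⟩, rfl⟩
  · refine off_dense.mono fun θ hθ => ?_
    obtain ⟨x, hx⟩ := proj_full MM_ne isClosed_closure fh_MM.subset θ
    refine ⟨⟨_, hx⟩, rfl, ?_⟩
    intro q hq
    apply Subtype.ext
    have hq' : q.1.1 = θ := hq
    exact att_unique (MM_sub q.2) (MM_sub hx) hq' (hq'.symm ▸ hθ)
  · intro ε hε
    refine ⟨ε, hε, fun y y' h n => ?_⟩
    rw [rot_iter, rot_iter, dist_add_right]
    exact h

end BlowUp

/-- a quasiperiodically forced increasing interval map with no continuous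
invariant curves, mapping the annulus strictly inside itself, whose global attractor is
pinched and contains a unique minimal set, which is almost automorphic. -/
theorem stmt5 :
    ∃ I : Set ℝ, IsCompact I ∧ I.OrdConnected ∧
      ∃ ρ : ℝ, Irrational ρ ∧
        ∃ fhat : T1 × ↥I → T1 × ↥I,
          ForcedIncreasing (fun θ : T1 => θ + (ρ : T1)) fhat ∧
          (∀ η : T1 → ↥I, Continuous η → fhat '' curveGraph η ≠ curveGraph η) ∧
          (∀ p : T1 × ↥I, ((fhat p).2 : ℝ) ∈ interior I) ∧
          Pinched (⋂ n : ℕ, fhat^[n] '' Set.univ) ∧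
          ∃ M : Set (T1 × ↥I), M ⊆ (⋂ n : ℕ, fhat^[n] '' Set.univ) ∧
            IsAAMinimal fhat M ∧
            ∀ M' : Set (T1 × ↥I), M' ⊆ (⋂ n : ℕ, fhat^[n] '' Set.univ) →
              IsMinimalSet fhat M' → M' = M := by
  refine ⟨BlowUp.II, isCompact_Icc, ordConnected_Icc, √2, BlowUp.irr, BlowUp.fh,
    BlowUp.fh_forced, BlowUp.no_curve, fun p => ?_, BlowUp.att_pinched, BlowUp.MM,
    BlowUp.MM_sub, BlowUp.MM_aa, fun M' hM' hmin => ?_⟩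
  · rw [interior_Icc]
    have h := abs_lt.1 (BlowUp.FF_xx (BlowUp.sec p).2)
    have e : ((BlowUp.fh p).2 : ℝ) = BlowUp.xx (BlowUp.FF (BlowUp.sec p).1) := rfl
    rw [e]
    constructor <;> linarith
  · exact (hmin.2.2.2 _ (BlowUp.MM_le hM' hmin.1 hmin.2.1 hmin.2.2.1.subset)
      BlowUp.MM_ne isClosed_closure BlowUp.fh_MM.subset).symm

end
end

section
/- There exists a quasiperiodically forced interval map F̂ : T¹ × I → T¹ × I (continuous skew product over an irrational rotation, fibre maps not necessarily monotone) which has a three-periodic continuous curve, i.e. a continuous γ : T¹ → I whose graph Γ satisfies F̂³(Γ) = Γ and F̂(Γ) ≠ Γ, but which has no invariant continuous curve: there is no continuous η : T¹ → I with F̂({(θ,η(θ))}) = {(θ,η(θ))}. -/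
open Set Function MeasureTheory

noncomputable section

/-- The fibre map, with heights `u`, `v` prescribed at `1/3`, `2/3`. -/
def gFib (u v x : ℝ) : ℝ :=
  max 0 (min (1 - 3 * x) (1 + x)) + u * max 0 (1 - |3 * x - 1|)
    + v * max 0 (1 - |3 * x - 2|) - max 0 (3 * x - 2)

def gClamp (u v x : ℝ) : ℝ := max (-1) (min 1 (gFib u v x))

def uFun (θ : T1) : ℝ := max 0 (1 - 3 * ‖θ‖)

def vFun (θ : T1) : ℝ := min 1 (3 * ‖θ - ((2 / 3 : ℝ) : T1)‖)

lemma gClamp_neg_one (u v : ℝ) : gClamp u v (-1) = 0 := by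
  unfold gClamp gFib; norm_num [abs_of_neg]

lemma gClamp_zero (u v : ℝ) : gClamp u v 0 = 1 := by
  unfold gClamp gFib; norm_num

lemma gClamp_one (u v : ℝ) : gClamp u v 1 = -1 := by
  unfold gClamp gFib; norm_num

lemma gClamp_neg (u v x : ℝ) (h1 : -1 < x) (h2 : x < 0) : 0 < gClamp u v x := by
  have a1 : |3 * x - 1| = -(3 * x - 1) := abs_of_neg (by linarith)
  have a2 : |3 * x - 2| = -(3 * x - 2) := abs_of_neg (by linarith)
  have b0 : min (1 - 3 * x) (1 + x) = 1 + x := min_eq_right (by linarith)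
  have b1 : max 0 (1 + x) = 1 + x := max_eq_right (by linarith)
  have b2 : max 0 (1 - -(3 * x - 1)) = 0 := max_eq_left (by linarith)
  have b3 : max 0 (1 - -(3 * x - 2)) = 0 := max_eq_left (by linarith)
  have b4 : max 0 (3 * x - 2) = 0 := max_eq_left (by linarith)
  unfold gClamp gFib
  rw [a1, a2, b0, b1, b2, b3, b4]
  apply lt_max_of_lt_right
  apply lt_min <;> linarith

lemma gClamp_one_one (x : ℝ) (h1 : 0 ≤ x) (h2 : x ≤ 2 / 3) : gClamp 1 1 x = 1 := by
  have b0 : min (1 - 3 * x) (1 + x) = 1 - 3 * x := min_eq_left (by linarith)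
  have b4 : max 0 (3 * x - 2) = 0 := max_eq_left (by linarith)
  have a2 : |3 * x - 2| = -(3 * x - 2) := abs_of_nonpos (by linarith)
  have key : 1 ≤ gFib 1 1 x := by
    unfold gFib
    rw [b0, b4, a2]
    rcases le_total x (1 / 3) with h | h
    · have a1 : |3 * x - 1| = -(3 * x - 1) := abs_of_nonpos (by linarith)
      rw [a1]
      linarith [le_max_right 0 (1 - 3 * x), le_max_right 0 (1 - -(3 * x - 1)),
        le_max_left 0 (1 - -(3 * x - 2))]
    · have a1 : |3 * x - 1| = (3 * x - 1) := abs_of_nonneg (by linarith)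
      rw [a1]
      linarith [le_max_left 0 (1 - 3 * x), le_max_right 0 (1 - (3 * x - 1)),
        le_max_right 0 (1 - -(3 * x - 2))]
  unfold gClamp
  rw [min_eq_left key]; norm_num

lemma gClamp_two_thirds (u : ℝ) : gClamp u 1 (2 / 3) = 1 := by
  unfold gClamp gFib; norm_num

lemma gClamp_one_third (v : ℝ) : gClamp 0 v (1 / 3) = 0 := by
  unfold gClamp gFib; norm_num

lemma gClamp_zero_zero (x : ℝ) (h1 : 1 / 3 ≤ x) : gClamp 0 0 x ≤ 0 := by
  have b0 : max 0 (min (1 - 3 * x) (1 + x)) = 0 :=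
    max_eq_left ((min_le_left _ _).trans (by linarith))
  unfold gClamp gFib
  rw [b0]
  apply max_le (by norm_num)
  apply (min_le_right _ _).trans
  linarith [le_max_left 0 (3 * x - 2)]

lemma third_le_norm (y : ℝ) (h1 : 1 / 3 ≤ y) (h2 : y ≤ 2 / 3) :
    1 / 3 ≤ ‖(y : T1)‖ := by
  rw [UnitAddCircle.norm_eq]
  rcases le_or_gt (round y) 0 with h | h
  · have : ((round y : ℤ) : ℝ) ≤ 0 := by exact_mod_cast h
    exact le_trans (by linarith) (le_abs_self _)
  · have : (1 : ℝ) ≤ ((round y : ℤ) : ℝ) := by exact_mod_cast h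
    exact le_trans (by linarith) (neg_le_abs _)

lemma uFun_zero : uFun ((0 : ℝ) : T1) = 1 := by simp [uFun]

lemma uFun_mid (y : ℝ) (h1 : 1 / 3 ≤ y) (h2 : y ≤ 2 / 3) : uFun (y : T1) = 0 := by
  have := third_le_norm y h1 h2
  exact max_eq_left (by linarith)

lemma vFun_left (y : ℝ) (h1 : 0 ≤ y) (h2 : y ≤ 1 / 3) : vFun (y : T1) = 1 := by
  have := third_le_norm (2 / 3 - y) (by linarith) (by linarith)
  rw [AddCircle.coe_sub, norm_sub_rev] at this
  exact min_eq_left (by linarith)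

lemma vFun_two_thirds : vFun ((2 / 3 : ℝ) : T1) = 0 := by simp [vFun]

lemma uFun_cont : Continuous uFun := by unfold uFun; fun_prop

lemma vFun_cont : Continuous vFun := by unfold vFun; fun_prop

/-- A continuous function on the circle with one value recurring along a `3ρ`-orbit is constant. -/
lemma const_of_recur (ρ : ℝ) (hρ : Irrational ρ) (e : T1 → ℝ) (he : Continuous e) (θ : T1)
    (h : ∀ n : ℕ, e (θ + n • ((3 * ρ : ℝ) : T1)) = e θ) : ∀ t, e t = e θ := by
  have hd : DenseRange (fun n : ℕ => n • ((3 * ρ : ℝ) : T1)) := by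
    rw [← denseRange_zsmul_iff_nsmul, AddCircle.denseRange_zsmul_coe_iff, div_one]
    exact_mod_cast hρ.natCast_mul (m := 3) (by norm_num)
  have := hd.equalizer (by fun_prop : Continuous fun s => e (θ + s))
    (continuous_const : Continuous fun _ => e θ) (by funext n; exact h n)
  intro t
  have h2 := congrFun this (t - θ)
  simpa using h2

lemma no_curve (ρ : ℝ) (hρ : Irrational ρ) (e : T1 → ℝ) (he : Continuous e)
    (hb1 : ∀ t, -1 ≤ e t) (hb2 : ∀ t, e t ≤ 1)
    (hi : ∀ t, e (t + (ρ : T1)) = gClamp (uFun t) (vFun t) (e t)) : False := by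
  have h3 : ∀ t : T1, t + ((3 * ρ : ℝ) : T1) = t + (ρ : T1) + (ρ : T1) + (ρ : T1) := by
    intro t
    have : (3 * ρ : ℝ) = ρ + ρ + ρ := by ring
    rw [this, AddCircle.coe_add, AddCircle.coe_add]; abel
  have step : ∀ c : ℝ, (∀ t, e t = c → e (t + ((3 * ρ : ℝ) : T1)) = c) →
      (∀ u v, gClamp u v c ≠ c) → ∀ t, e t ≠ c := by
    intro c hc hne t ht
    have hn : ∀ n : ℕ, e (t + n • ((3 * ρ : ℝ) : T1)) = c := by
      intro n
      induction n with
      | zero => simpa using ht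
      | succ k ih =>
        have := hc _ ih
        rwa [add_assoc, ← succ_nsmul] at this
    have hall := const_of_recur ρ hρ e he t (fun n => by rw [hn, ht])
    have h := hi t
    rw [hall, ht] at h
    exact hne _ _ h.symm
  have z0 : ∀ t, e t ≠ 0 := step 0
    (fun t ht => by
      rw [h3, hi, hi, hi, ht, gClamp_zero, gClamp_one, gClamp_neg_one])
    (fun u v => by rw [gClamp_zero]; norm_num)
  have z1 : ∀ t, e t ≠ 1 := step 1
    (fun t ht => by
      rw [h3, hi, hi, hi, ht, gClamp_one, gClamp_neg_one, gClamp_zero])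
    (fun u v => by rw [gClamp_one]; norm_num)
  have z2 : ∀ t, e t ≠ -1 := step (-1)
    (fun t ht => by
      rw [h3, hi, hi, hi, ht, gClamp_neg_one, gClamp_zero, gClamp_one])
    (fun u v => by rw [gClamp_neg_one]; norm_num)
  have hpos : ∀ t, 0 < e t := by
    intro t
    by_contra hcon
    have hlt : e t < 0 := lt_of_le_of_ne (not_lt.1 hcon) (z0 t)
    have hgt : 0 < e (t + (ρ : T1)) := by
      rw [hi]
      exact gClamp_neg _ _ _ (lt_of_le_of_ne (hb1 t) (z2 t).symm) hlt
    obtain ⟨s, hs⟩ := mem_range_of_exists_le_of_exists_ge he ⟨t, hlt.le⟩ ⟨_, hgt.le⟩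
    exact z0 s hs
  let E : ℝ → ℝ := fun y => e (y : T1)
  have hE : Continuous E := he.comp (AddCircle.continuous_mk' 1)
  have l0 : 2 / 3 < E 0 := by
    by_contra hcon
    apply z1 (((0 : ℝ) : T1) + (ρ : T1))
    rw [hi, uFun_zero, vFun_left 0 le_rfl (by norm_num)]
    exact gClamp_one_one _ (hpos _).le (not_lt.1 hcon)
  have l1 : 2 / 3 < E (1 / 3) := by
    by_contra hcon
    obtain ⟨s, hs, hs2⟩ := intermediate_value_Icc' (by norm_num : (0 : ℝ) ≤ 1 / 3)
      hE.continuousOn ⟨not_lt.1 hcon, l0.le⟩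
    apply z1 ((s : T1) + (ρ : T1))
    have hs3 : e (s : T1) = 2 / 3 := hs2
    rw [hi, vFun_left s hs.1 hs.2, hs3, gClamp_two_thirds]
  have r0 : E (2 / 3) < 1 / 3 := by
    by_contra hcon
    have := hpos (((2 / 3 : ℝ) : T1) + (ρ : T1))
    rw [hi, uFun_mid _ (by norm_num) le_rfl, vFun_two_thirds] at this
    exact absurd (gClamp_zero_zero _ (not_lt.1 hcon)) (not_le.2 this)
  obtain ⟨s, hs, hs2⟩ := intermediate_value_Icc' (by norm_num : (1 / 3 : ℝ) ≤ 2 / 3)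
      hE.continuousOn ⟨r0.le, (by linarith : (1 / 3 : ℝ) ≤ E (1 / 3))⟩
  apply z0 ((s : T1) + (ρ : T1))
  have hs3 : e (s : T1) = 1 / 3 := hs2
  rw [hi, uFun_mid s hs.1 hs.2, hs3, gClamp_one_third]

/-- The forced map. -/
def Fmap (ρ : ℝ) (p : T1 × ↥(Set.Icc (-1 : ℝ) 1)) : T1 × ↥(Set.Icc (-1 : ℝ) 1) :=
  (p.1 + (ρ : T1), ⟨gClamp (uFun p.1) (vFun p.1) p.2,
    le_max_left _ _, max_le (by norm_num) (min_le_left _ _)⟩)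

lemma Fmap_cont (ρ : ℝ) : Continuous (Fmap ρ) := by
  have := uFun_cont
  have := vFun_cont
  unfold Fmap gClamp gFib
  fun_prop

/-- a quasiperiodically forced interval map with a three-periodic
continuous curve but no invariant continuous curve. -/
theorem stmt6 :
    ∃ I : Set ℝ, IsCompact I ∧ I.OrdConnected ∧
      ∃ ρ : ℝ, Irrational ρ ∧
        ∃ F : T1 × ↥I → T1 × ↥I, Continuous F ∧
          (∀ p : T1 × ↥I, (F p).1 = p.1 + (ρ : T1)) ∧
          (∃ γ : T1 → ↥I, Continuous γ ∧
            F^[3] '' curveGraph γ = curveGraph γ ∧ F '' curveGraph γ ≠ curveGraph γ) ∧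
          (∀ η : T1 → ↥I, Continuous η → F '' curveGraph η ≠ curveGraph η) := by
  have hz : (0 : ℝ) ∈ Set.Icc (-1 : ℝ) 1 := by norm_num
  have ho : (1 : ℝ) ∈ Set.Icc (-1 : ℝ) 1 := by norm_num
  have hm : (-1 : ℝ) ∈ Set.Icc (-1 : ℝ) 1 := by norm_num
  have f0 : ∀ (ρ : ℝ) t, Fmap ρ (t, ⟨0, hz⟩) = (t + (ρ : T1), ⟨1, ho⟩) := by
    intro ρ t
    simp [Fmap, gClamp_zero]
  have f1 : ∀ (ρ : ℝ) t, Fmap ρ (t, ⟨1, ho⟩) = (t + (ρ : T1), ⟨-1, hm⟩) := by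
    intro ρ t
    simp [Fmap, gClamp_one]
  have f2 : ∀ (ρ : ℝ) t, Fmap ρ (t, ⟨-1, hm⟩) = (t + (ρ : T1), ⟨0, hz⟩) := by
    intro ρ t
    simp [Fmap, gClamp_neg_one]
  have f3 : ∀ (ρ : ℝ) t, (Fmap ρ)^[3] (t, ⟨0, hz⟩) =
      (t + (ρ : T1) + (ρ : T1) + (ρ : T1), ⟨0, hz⟩) := by
    intro ρ t
    change Fmap ρ (Fmap ρ (Fmap ρ _)) = _
    rw [f0, f1, f2]
  refine ⟨Set.Icc (-1) 1, isCompact_Icc, Set.ordConnected_Icc, √2, irrational_sqrt_two,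
    Fmap √2, Fmap_cont _, fun p => rfl, ⟨fun _ => ⟨0, hz⟩, continuous_const, ?_, ?_⟩, ?_⟩
  · ext ⟨t, x⟩
    constructor
    · rintro ⟨⟨s, y⟩, hy, h⟩
      have hy' : y = ⟨0, hz⟩ := hy
      subst hy'
      rw [f3] at h
      exact (congrArg Prod.snd h).symm
    · intro h
      have hx : x = ⟨0, hz⟩ := h
      subst hx
      refine ⟨(t - ((√2 : ℝ) : T1) - ((√2 : ℝ) : T1) - ((√2 : ℝ) : T1), ⟨0, hz⟩), rfl, ?_⟩
      rw [f3]
      simp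
  · intro h
    have hmem : Fmap √2 (0, ⟨0, hz⟩) ∈ Fmap √2 '' curveGraph (fun _ : T1 => ⟨0, hz⟩) :=
      ⟨_, rfl, rfl⟩
    rw [h, f0] at hmem
    have h1 : (⟨1, ho⟩ : ↥(Set.Icc (-1 : ℝ) 1)) = ⟨0, hz⟩ := hmem
    have := congrArg Subtype.val h1
    norm_num at this
  · intro η hη h
    refine no_curve √2 irrational_sqrt_two (fun t => (η t : ℝ)) (by fun_prop)
      (fun t => (η t).2.1) (fun t => (η t).2.2) ?_
    intro t
    have hmem : Fmap √2 (t, η t) ∈ Fmap √2 '' curveGraph η := ⟨_, rfl, rfl⟩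
    rw [h] at hmem
    have h1 : (Fmap √2 (t, η t)).2 = η (t + ((√2 : ℝ) : T1)) := hmem
    exact (congrArg Subtype.val h1).symm

end
end

section
/- Let R be an irrational rotation of T¹ = ℝ/ℤ, x₀ ∈ T¹ with 0 ∉ {xₙ := Rⁿ(x₀) : n ∈ ℤ}, let (aₙ)_{n∈ℤ} be strictly positive reals with Σ_{n∈ℤ} aₙ < 1, b := 1 − Σ aₙ, and ν := Σ_{n∈ℤ} aₙ δ_{xₙ} + b·Leb_{T¹}. Let h(x) := min{ y : ν[0,y] ≥ x } (identifying T¹ with [0,1)), Iₙ := h^{-1}{xₙ} = [cₙ, dₙ], and A := T¹ \ ⋃_{n∈ℤ} [cₙ, dₙ), so that h|_A : A → T¹ is a bijection. Then the map f̃ := (h|_A)^{-1} ∘ R ∘ (h|_A) : A → A is strictly order-preserving and uniformly continuous on A. -/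
open Set Function MeasureTheory

noncomputable section

/-- The identification of `T¹` with `[0,1)`. -/
def lift1 : T1 → ℝ := fun x => ((AddCircle.equivIco 1 0 x : ↥(Set.Ico (0:ℝ) (0+1))) : ℝ)

lemma lift1_nonneg (z : T1) : 0 ≤ lift1 z := (AddCircle.equivIco 1 0 z).2.1

lemma lift1_lt_one (z : T1) : lift1 z < 1 := by
  have := (AddCircle.equivIco (1:ℝ) 0 z).2.2
  unfold lift1
  linarith

lemma coe_lift1 (z : T1) : ((lift1 z : ℝ) : T1) = z := AddCircle.coe_equivIco

lemma lift1_coe {t : ℝ} (h0 : 0 ≤ t) (h1 : t < 1) : lift1 (t : T1) = t :=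
  AddCircle.equivIco_coe_of_mem (p := (1:ℝ)) (a := 0) ⟨h0, by linarith⟩

lemma lift1_inj {u v : T1} (h : lift1 u = lift1 v) : u = v := by
  rw [← coe_lift1 u, h, coe_lift1]

lemma coe_one_T1 : ((1:ℝ) : T1) = 0 := AddCircle.coe_period 1

lemma lift1_sub_of_le {u w : T1} (h : lift1 w ≤ lift1 u) :
    lift1 (u - w) = lift1 u - lift1 w := by
  have e : u - w = ((lift1 u - lift1 w : ℝ) : T1) := by
    rw [AddCircle.coe_sub, coe_lift1, coe_lift1]
  rw [e]
  have := lift1_nonneg w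
  have := lift1_lt_one u
  exact lift1_coe (by linarith) (by linarith)

lemma lift1_sub_of_lt {u w : T1} (h : lift1 u < lift1 w) :
    lift1 (u - w) = lift1 u - lift1 w + 1 := by
  have e : u - w = ((lift1 u - lift1 w + 1 : ℝ) : T1) := by
    rw [AddCircle.coe_add, AddCircle.coe_sub, coe_lift1, coe_lift1, coe_one_T1, add_zero]
  rw [e]
  have := lift1_nonneg u
  have := lift1_lt_one w
  exact lift1_coe (by linarith) (by linarith)

lemma lift1_zero : lift1 (0 : T1) = 0 := by
  have := lift1_coe (t := 0) le_rfl one_pos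
  simpa using this

lemma sbtw_iff_sub (u v w : T1) :
    sbtw u v w ↔ u ≠ w ∧ lift1 (u - w) < lift1 (v - w) := by
  rw [sbtw_iff_not_btw]
  have hb : btw w v u ↔ lift1 (v - w) ≤
    ((QuotientAddGroup.equivIocMod (one_pos : (0:ℝ) < 1) 0 (u - w) : Set.Ioc (0:ℝ) (0+1)) : ℝ) :=
    Iff.rfl
  rw [hb, not_le]
  set e := QuotientAddGroup.equivIocMod (one_pos : (0:ℝ) < 1) 0 (u - w) with he
  have hc : ((e : ℝ) : T1) = u - w :=
    (QuotientAddGroup.equivIocMod (one_pos : (0:ℝ) < 1) 0).left_inv (u - w)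
  have h1 := e.2.1
  have h2 := e.2.2
  have h3 := lift1_lt_one (v - w)
  rcases lt_or_ge (e : ℝ) 1 with h | h
  · rw [← hc, lift1_coe h1.le h]
    refine ⟨fun h' => ⟨?_, h'⟩, fun h' => h'.2⟩
    rintro rfl
    rw [sub_self] at hc
    have := lift1_coe h1.le h
    rw [hc, lift1_zero] at this
    linarith
  · have h5 : (e : ℝ) = 1 := by linarith
    refine ⟨fun h' => by linarith, fun h' => ?_⟩
    exfalso
    rw [h5, coe_one_T1] at hc
    exact h'.1 (sub_eq_zero.1 hc.symm)

lemma sbtw_add (u v w r : T1) : sbtw (u + r) (v + r) (w + r) ↔ sbtw u v w := by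
  rw [sbtw_iff_sub, sbtw_iff_sub]
  simp

lemma sbtw_iff_lift (u v w : T1) :
    sbtw u v w ↔ (lift1 u < lift1 v ∧ lift1 v < lift1 w) ∨
      (lift1 v < lift1 w ∧ lift1 w < lift1 u) ∨ (lift1 w < lift1 u ∧ lift1 u < lift1 v) := by
  rw [sbtw_iff_sub]
  have hne : u ≠ w ↔ lift1 u ≠ lift1 w := ⟨fun h h' => h (lift1_inj h'), fun h h' => h (h' ▸ rfl)⟩
  rw [hne]
  have := lift1_nonneg u
  have := lift1_nonneg v
  have := lift1_nonneg w
  have := lift1_lt_one u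
  have := lift1_lt_one v
  have := lift1_lt_one w
  rcases le_or_gt (lift1 w) (lift1 u) with h1 | h1 <;>
  rcases le_or_gt (lift1 w) (lift1 v) with h2 | h2
  · rw [lift1_sub_of_le h1, lift1_sub_of_le h2]; grind
  · rw [lift1_sub_of_le h1, lift1_sub_of_lt h2]; grind
  · rw [lift1_sub_of_lt h1, lift1_sub_of_le h2]; grind
  · rw [lift1_sub_of_lt h1, lift1_sub_of_lt h2]; grind

lemma measurable_lift1 : Measurable lift1 :=
  measurable_subtype_coe.comp (AddCircle.measurableEquivIco 1 0).measurable

lemma volume_lift_pos {s t : ℝ} (hs : 0 ≤ s) (hst : s < t) (ht : t ≤ 1) :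
    0 < (volume : Measure T1) {w | s < lift1 w ∧ lift1 w < t} := by
  have ho : IsOpen ((fun r : ℝ => (r : T1)) '' Set.Ioo s t) :=
    QuotientAddGroup.isOpenMap_coe _ isOpen_Ioo
  refine lt_of_lt_of_le (ho.measure_pos volume ((nonempty_Ioo.2 hst).image _)) (measure_mono ?_)
  rintro _ ⟨r, hr, rfl⟩
  have := lift1_coe (hs.trans hr.1.le) (hr.2.trans_le ht)
  simp only [mem_ofPred_eq, this]
  exact hr

/-- Rotated distribution function. -/
lemma rot_dist (ν : Measure T1) [IsProbabilityMeasure ν] (r y : T1) :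
    ((ν.real {w | lift1 w ≤ lift1 (y + r)} : ℝ) : T1) =
      ((ν.real {w | lift1 w < lift1 r} + ν.real {w | lift1 (w - r) ≤ lift1 y} : ℝ) : T1) := by
  have hm (q : ℝ) : MeasurableSet {w | lift1 w ≤ q} := measurable_lift1 measurableSet_Iic
  have hm' (q : ℝ) : MeasurableSet {w | lift1 w < q} := measurable_lift1 measurableSet_Iio
  have hms : MeasurableSet {w | lift1 (w - r) ≤ lift1 y} :=
    (measurable_lift1.comp (measurable_id.sub_const r)) measurableSet_Iic
  have := lift1_nonneg y
  have := lift1_nonneg r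
  have := lift1_lt_one y
  have := lift1_lt_one r
  have e : y + r = ((lift1 y + lift1 r : ℝ) : T1) := by
    rw [AddCircle.coe_add, coe_lift1, coe_lift1]
  have e' : y + r = ((lift1 y + lift1 r - 1 : ℝ) : T1) := by
    rw [AddCircle.coe_sub, coe_one_T1, sub_zero, e]
  rcases lt_or_ge (lift1 y + lift1 r) 1 with h | h
  · have hl : lift1 (y + r) = lift1 y + lift1 r := by
      rw [e, lift1_coe (by linarith) h]
    congr 1
    rw [← measureReal_union _ hms]
    · congr 1
      ext w
      simp only [mem_ofPred_eq, mem_union, hl]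
      have := lift1_nonneg w
      rcases le_or_gt (lift1 r) (lift1 w) with h2 | h2
      · rw [lift1_sub_of_le h2]; grind
      · rw [lift1_sub_of_lt h2]; grind
    · rw [Set.disjoint_left]
      intro w hw hw'
      simp only [mem_ofPred_eq] at hw hw'
      rw [lift1_sub_of_lt hw] at hw'
      have := lift1_nonneg w
      linarith
  · have hl : lift1 (y + r) = lift1 y + lift1 r - 1 := by
      rw [e', lift1_coe (by linarith) (by linarith)]
    have key : ν.real {w | lift1 w < lift1 r} =
        ν.real {w | lift1 w ≤ lift1 (y + r)} + ν.real ({w | lift1 (w - r) ≤ lift1 y}ᶜ) := by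
      rw [← measureReal_union _ hms.compl]
      · congr 1
        ext w
        simp only [mem_ofPred_eq, mem_union, mem_compl_iff, hl]
        have := lift1_lt_one w
        rcases le_or_gt (lift1 r) (lift1 w) with h2 | h2
        · rw [lift1_sub_of_le h2]; grind
        · rw [lift1_sub_of_lt h2]; grind
      · rw [Set.disjoint_left]
        intro w hw hw'
        simp only [mem_ofPred_eq, mem_compl_iff, hl] at hw hw'
        rw [lift1_sub_of_lt (by linarith)] at hw'
        apply hw'
        linarith
    rw [probReal_compl_eq_one_sub hms] at key
    have : ν.real {w | lift1 w < lift1 r} + ν.real {w | lift1 (w - r) ≤ lift1 y} =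
      ν.real {w | lift1 w ≤ lift1 (y + r)} + 1 := by linarith
    rw [this, AddCircle.coe_add, coe_one_T1, add_zero]

lemma norm_coe_le_abs (t : ℝ) : ‖(t : T1)‖ ≤ |t| := by
  have := QuotientAddGroup.norm_mk_le_norm (S := AddSubgroup.zmultiples (1:ℝ)) (m := t)
  simpa using this

lemma ac_eps {μ ν : Measure T1} [IsFiniteMeasure μ] [IsFiniteMeasure ν] (hac : μ ≪ ν) {ε : ℝ}
    (hε : 0 < ε) : ∃ δ > 0, ∀ s, ν.real s < δ → μ.real s < ε := by
  have hfin : ∫⁻ x, μ.rnDeriv ν x ∂ν ≠ ⊤ := (Measure.lintegral_rnDeriv_lt_top μ ν).ne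
  obtain ⟨δ, hδ, H⟩ := exists_pos_setLIntegral_lt_of_measure_lt hfin
    (ε := ENNReal.ofReal ε) (by simpa using hε)
  have h1 : min δ 1 ≠ ⊤ := by simp
  have h2 : 0 < min δ 1 := by simp [hδ]
  refine ⟨(min δ 1).toReal, ENNReal.toReal_pos h2.ne' h1, fun s hs => ?_⟩
  have h3 : ν s < δ := by
    have := (ENNReal.toReal_lt_toReal (measure_ne_top ν s) h1).1 hs
    exact this.trans_le (min_le_left _ _)
  have h4 := H s h3
  have hL : μ.HaveLebesgueDecomposition ν := Measure.haveLebesgueDecomposition_of_sigmaFinite μ ν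
  rw [Measure.setLIntegral_rnDeriv hac] at h4
  have := (ENNReal.toReal_lt_toReal (measure_ne_top μ s) ENNReal.ofReal_ne_top).2 h4
  rwa [ENNReal.toReal_ofReal hε.le] at this

lemma lift_dist {u v : T1} {δ : ℝ} (huv : lift1 u ≤ lift1 v) (hd : dist u v < δ) :
    lift1 v - lift1 u < δ ∨ 1 - (lift1 v - lift1 u) < δ := by
  have e : v - u = ((lift1 v - lift1 u : ℝ) : T1) := by
    rw [AddCircle.coe_sub, coe_lift1, coe_lift1]
  rw [dist_comm, dist_eq_norm, e, UnitAddCircle.norm_eq, abs_sub_round_eq_min,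
    Int.fract_eq_self.2, min_lt_iff] at hd
  · exact hd
  · have := lift1_nonneg u
    have := lift1_lt_one v
    exact ⟨by linarith, by linarith⟩

/-- in the Denjoy construction, the map `f̃ = (h|_A)⁻¹ ∘ R ∘ (h|_A)` is
strictly (cyclic-)order-preserving and uniformly continuous on `A`. -/
theorem stmt10 (ρ : ℝ) (hρ : Irrational ρ)
    (x₀ : T1) (x : ℤ → T1) (hx : ∀ n : ℤ, x n = x₀ + n • (ρ : T1))
    (h0 : (0 : T1) ∉ Set.range x)
    (a : ℤ → ℝ) (ha : ∀ n, 0 < a n) (hsum : Summable a) (hlt : (∑' n : ℤ, a n) < 1)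
    (ν : Measure T1)
    (hν : ν = Measure.sum (fun n : ℤ => ENNReal.ofReal (a n) • Measure.dirac (x n)) +
      ENNReal.ofReal (1 - ∑' n : ℤ, a n) • volume)
    (h : T1 → T1)
    (hmin : ∀ z, ENNReal.ofReal (lift1 z) ≤ ν {w | lift1 w ≤ lift1 (h z)} ∧
      ∀ y, ENNReal.ofReal (lift1 z) ≤ ν {w | lift1 w ≤ lift1 y} → lift1 (h z) ≤ lift1 y)
    (c d : ℤ → T1)
    (hcd : ∀ n : ℤ, h ⁻¹' {x n} = {z | lift1 (c n) ≤ lift1 z ∧ lift1 z ≤ lift1 (d n)})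
    (A : Set T1)
    (hA : A = Set.univ \ ⋃ n : ℤ, {z | lift1 (c n) ≤ lift1 z ∧ lift1 z < lift1 (d n)})
    (hbij : Set.BijOn h A Set.univ)
    (ft : T1 → T1)
    (hft : ∀ z ∈ A, ft z ∈ A ∧ h (ft z) = h z + (ρ : T1)) :
    (∀ u ∈ A, ∀ v ∈ A, ∀ w ∈ A, sbtw u v w → sbtw (ft u) (ft v) (ft w)) ∧
    UniformContinuousOn ft A := by
  have hb : 0 < 1 - ∑' n, a n := by linarith
  have hprob : IsProbabilityMeasure ν := by
    constructor
    rw [hν, Measure.add_apply, Measure.sum_apply _ MeasurableSet.univ]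
    simp only [Measure.smul_apply, measure_univ, smul_eq_mul, mul_one, UnitAddCircle.measure_univ]
    rw [← ENNReal.ofReal_tsum_of_nonneg (fun n => (ha n).le) hsum,
      ← ENNReal.ofReal_add (tsum_nonneg fun n => (ha n).le) hb.le]
    simp
  have hm (q : ℝ) : MeasurableSet {w | lift1 w ≤ q} := measurable_lift1 measurableSet_Iic
  have hpos : ∀ {s t : ℝ}, 0 ≤ s → s < t → t ≤ 1 →
      0 < ν.real {w | s < lift1 w ∧ lift1 w < t} := by
    intro s t hs hst ht
    refine ENNReal.toReal_pos (ne_of_gt ?_) (measure_ne_top _ _)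
    rw [hν, Measure.add_apply]
    refine lt_of_lt_of_le ?_ le_add_self
    rw [Measure.smul_apply, smul_eq_mul]
    exact ENNReal.mul_pos (by simpa using hb) (volume_lift_pos hs hst ht).ne'
  set F : T1 → ℝ := fun y => ν.real {w | lift1 w ≤ lift1 y} with hF
  have hFnn : ∀ y, 0 ≤ F y := fun y => measureReal_nonneg
  have hFmono : ∀ y y', lift1 y < lift1 y' → F y < F y' := by
    intro y y' hy
    have h1 := hpos (lift1_nonneg y) hy (lift1_lt_one y').le
    have h2 : F y + ν.real {w | lift1 y < lift1 w ∧ lift1 w < lift1 y'} ≤ F y' := by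
      rw [hF]
      simp only
      rw [← measureReal_union' _ (hm _)]
      · refine measureReal_mono ?_ (measure_ne_top _ _)
        rintro w (hw | hw)
        · exact hw.trans hy.le
        · exact hw.2.le
      · rw [Set.disjoint_left]
        intro w hw hw'
        exact absurd hw'.1 (not_lt.2 hw)
    linarith
  have hFlt : ∀ y, F y < 1 := by
    intro y
    have h1 := hpos (lift1_nonneg y) (lift1_lt_one y) le_rfl
    have h2 : F y + ν.real {w | lift1 y < lift1 w ∧ lift1 w < 1} ≤ 1 := by
      rw [hF]
      simp only
      rw [← measureReal_union' _ (hm _)]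
      · exact measureReal_le_one
      · rw [Set.disjoint_left]
        intro w hw hw'
        exact absurd hw'.1 (not_lt.2 hw)
    linarith
  have hle : ∀ z y, ENNReal.ofReal (lift1 z) ≤ ν {w | lift1 w ≤ lift1 y} ↔ lift1 z ≤ F y := by
    intro z y
    exact ENNReal.ofReal_le_iff_le_toReal (measure_ne_top _ _)
  have hl : ∀ y, lift1 ((F y : ℝ) : T1) = F y := fun y => lift1_coe (hFnn y) (hFlt y)
  have hhF : ∀ y, h ((F y : ℝ) : T1) = y := by
    intro y
    obtain ⟨h1, h2⟩ := hmin ((F y : ℝ) : T1)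
    rw [hle, hl] at h1
    have h3 := h2 y (by rw [hle, hl])
    apply lift1_inj
    refine le_antisymm h3 (not_lt.1 fun h4 => ?_)
    have := hFmono _ _ h4
    linarith
  have hFA : ∀ y, ((F y : ℝ) : T1) ∈ A := by
    intro y
    rw [hA]
    refine ⟨mem_univ _, ?_⟩
    rw [mem_iUnion]
    rintro ⟨n, hn1, hn2⟩
    have h1 : ((F y : ℝ) : T1) ∈ h ⁻¹' {x n} := by
      rw [hcd]; exact ⟨hn1, hn2.le⟩
    have h2 : d n ∈ h ⁻¹' {x n} := by
      rw [hcd]; exact ⟨hn1.trans hn2.le, le_rfl⟩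
    rw [mem_preimage, mem_singleton_iff] at h1 h2
    rw [hhF] at h1
    have h3 := (hmin (d n)).1
    rw [h2, ← h1, hle] at h3
    rw [hl] at hn2
    linarith
  have hAF : ∀ z ∈ A, z = ((F (h z) : ℝ) : T1) := by
    intro z hz
    exact hbij.injOn hz (hFA _) (hhF _).symm
  have hlA : ∀ z ∈ A, lift1 z = F (h z) := by
    intro z hz
    conv_lhs => rw [hAF z hz]
    exact hl _
  have hFlt_iff : ∀ y y', F y < F y' ↔ lift1 y < lift1 y' := by
    intro y y'
    refine ⟨fun h1 => ?_, hFmono y y'⟩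
    by_contra h2
    rcases (not_lt.1 h2).lt_or_eq with h3 | h3
    · linarith [hFmono _ _ h3]
    · rw [lift1_inj h3] at h1; exact lt_irrefl _ h1
  have hltA : ∀ u ∈ A, ∀ v ∈ A, (lift1 u < lift1 v ↔ lift1 (h u) < lift1 (h v)) := by
    intro u hu v hv
    rw [hlA u hu, hlA v hv, hFlt_iff]
  have hsb : ∀ u ∈ A, ∀ v ∈ A, ∀ w ∈ A, (sbtw u v w ↔ sbtw (h u) (h v) (h w)) := by
    intro u hu v hv w hw
    rw [sbtw_iff_lift, sbtw_iff_lift, hltA u hu v hv, hltA v hv w hw, hltA w hw u hu]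
  refine ⟨?_, ?_⟩
  · intro u hu v hv w hw huvw
    rw [hsb _ (hft u hu).1 _ (hft v hv).1 _ (hft w hw).1, (hft u hu).2, (hft v hv).2,
      (hft w hw).2, sbtw_add]
    exact (hsb u hu v hv w hw).1 huvw
  · have hsubm : Measurable (fun w : T1 => w - (ρ : T1)) := measurable_id.sub_const _
    set μ : Measure T1 := ν.map (fun w : T1 => w - (ρ : T1)) with hμ
    have : IsProbabilityMeasure μ := Measure.isProbabilityMeasure_map hsubm.aemeasurable
    have hac : μ ≪ ν := by
      refine Measure.AbsolutelyContinuous.mk fun s hs h1 => ?_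
      rw [hμ, Measure.map_apply hsubm hs]
      have hs' := hsubm hs
      rw [hν, Measure.add_apply, Measure.sum_apply _ hs, add_eq_zero, ENNReal.tsum_eq_zero] at h1
      rw [hν, Measure.add_apply, Measure.sum_apply _ hs', add_eq_zero, ENNReal.tsum_eq_zero]
      obtain ⟨h2, h3⟩ := h1
      simp only [Measure.smul_apply, smul_eq_mul, mul_eq_zero, ENNReal.ofReal_eq_zero] at h2 h3 ⊢
      refine ⟨fun n => Or.inr ?_, Or.inr ?_⟩
      · have h4 := (h2 (n - 1)).resolve_left (not_le.2 (ha _))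
        rw [Measure.dirac_apply' _ hs] at h4
        rw [Measure.dirac_apply' _ hs']
        have h5 : x n - (ρ : T1) = x (n - 1) := by
          rw [hx, hx, sub_smul, one_smul]; abel
        rw [← h5] at h4
        exact h4
      · have h4 := h3.resolve_left (not_le.2 hb)
        have := measure_preimage_add_right (volume : Measure T1) (-(ρ : T1)) s
        simp only [← sub_eq_add_neg] at this
        rw [this, h4]
    set G : T1 → ℝ := fun y => μ.real {w | lift1 w ≤ lift1 y} with hG
    have hrot : ∀ y : T1, ((F (y + ρ) : ℝ) : T1) =
        ((ν.real {w | lift1 w < lift1 (ρ : T1)} : ℝ) : T1) + ((G y : ℝ) : T1) := by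
      intro y
      rw [← AddCircle.coe_add, hF]
      simp only
      rw [rot_dist, hG]
      simp only
      rw [hμ, map_measureReal_apply hsubm (hm _)]
      rfl
    have hfteq : ∀ z ∈ A, ft z = ((F (h z + ρ) : ℝ) : T1) := by
      intro z hz
      rw [← (hft z hz).2]
      exact hAF _ (hft z hz).1
    have hdiff : ∀ u ∈ A, ∀ v ∈ A, ft v - ft u = ((G (h v) - G (h u) : ℝ) : T1) := by
      intro u hu v hv
      rw [hfteq u hu, hfteq v hv, hrot, hrot, AddCircle.coe_sub]
      abel
    have harc : ∀ (m : Measure T1) [IsProbabilityMeasure m], ∀ y y', lift1 y ≤ lift1 y' →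
        m.real ({w | lift1 w ≤ lift1 y'} \ {w | lift1 w ≤ lift1 y}) =
        m.real {w | lift1 w ≤ lift1 y'} - m.real {w | lift1 w ≤ lift1 y} := by
      intro m _ y y' hy
      exact measureReal_sdiff (fun w hw => le_trans hw hy) (hm _)
    rw [Metric.uniformContinuousOn_iff]
    intro ε hε
    obtain ⟨δ, hδ, H⟩ := ac_eps hac hε
    have main : ∀ u ∈ A, ∀ v ∈ A, lift1 u ≤ lift1 v → dist u v < δ → dist (ft u) (ft v) < ε := by
      intro u hu v hv huv hd
      have hh : lift1 (h u) ≤ lift1 (h v) := by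
        rw [← not_lt, ← hltA v hv u hu, not_lt]; exact huv
      have k1 := harc ν _ _ hh
      have k2 := harc μ _ _ hh
      have hJ := (hm (lift1 (h v))).diff (hm (lift1 (h u)))
      have c1 := probReal_compl_eq_one_sub (μ := ν) hJ
      have c2 := probReal_compl_eq_one_sub (μ := μ) hJ
      have e1 : lift1 v - lift1 u = F (h v) - F (h u) := by rw [hlA u hu, hlA v hv]
      rw [dist_comm, dist_eq_norm, hdiff u hu v hv]
      rcases lift_dist huv hd with h1 | h1
      · have h2 := H _ (by rw [k1]; linarith)
        refine (norm_coe_le_abs _).trans_lt ?_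
        rw [hG]
        simp only
        rw [← k2, abs_of_nonneg measureReal_nonneg]
        exact h2
      · have h2 := H _ (by rw [c1, k1]; linarith)
        have e2 : ((G (h v) - G (h u) : ℝ) : T1) = ((G (h v) - G (h u) - 1 : ℝ) : T1) := by
          rw [AddCircle.coe_sub _ (G (h v) - G (h u)) 1, coe_one_T1, sub_zero]
        rw [e2]
        refine (norm_coe_le_abs _).trans_lt ?_
        rw [c2, k2] at h2
        have h3 : μ.real ({w | lift1 w ≤ lift1 (h v)} \ {w | lift1 w ≤ lift1 (h u)}) ≤ 1 :=
          measureReal_le_one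
        rw [k2] at h3
        rw [abs_sub_comm, abs_of_nonneg (by linarith)]
        exact h2
    refine ⟨δ, hδ, fun u hu v hv hd => ?_⟩
    rcases le_total (lift1 u) (lift1 v) with h1 | h1
    · exact main u hu v hv h1 hd
    · rw [dist_comm]
      exact main v hv u hu h1 (by rwa [dist_comm])

end
end
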